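/- Let f = p/q be a rational function of two real variables bounded near v₀ = (x₀,y₀) and let d ∈ D_f(v₀) be a limiting value of f at v₀. Then there exists a sequence v_n → v₀ with v_n ≠ v₀ such that f(v_n) → d and, moreover, for every rational function g = r/s of two real variables bounded near v₀, one has s(v_n) ≠ 0 for all sufficiently large n and g(v_n) converges to a finite limit. -/

import Mathlib

open MvPolynomial Filter Topology

/-- Evaluation of a two-variable real polynomial at a point of `ℝ²`. -/
noncomputable def pev (p : MvPolynomial (Fin 2) ℝ) (v : ℝ × ℝ) : ℝ :=
  MvPolynomial.eval ![v.1, v.2] p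

/-- `p/q` is bounded near `v₀`. -/
def BoundedNear (p q : MvPolynomial (Fin 2) ℝ) (v₀ : ℝ × ℝ) : Prop :=
  ∃ U ∈ nhds v₀, ∃ M : ℝ, ∀ v ∈ U, pev q v ≠ 0 → |pev p v / pev q v| ≤ M

/-- The set of limiting values of `p/q` at `v₀`. -/
def LimVals (p q : MvPolynomial (Fin 2) ℝ) (v₀ : ℝ × ℝ) : Set ℝ :=
  {d | ∃ v : ℕ → ℝ × ℝ, Filter.Tendsto v Filter.atTop (nhds v₀) ∧ (∀ n, v n ≠ v₀) ∧
    (∀ n, pev q (v n) ≠ 0) ∧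
    Filter.Tendsto (fun n => pev p (v n) / pev q (v n)) Filter.atTop (nhds d)}




noncomputable def toBi : MvPolynomial (Fin 2) ℝ →ₐ[ℝ] Polynomial (Polynomial ℝ) :=
  MvPolynomial.aeval ![Polynomial.C Polynomial.X, Polynomial.X]

noncomputable def ofBi : Polynomial (Polynomial ℝ) →+* MvPolynomial (Fin 2) ℝ :=
  Polynomial.eval₂RingHom (Polynomial.aeval (X 0 : MvPolynomial (Fin 2) ℝ)).toRingHom (X 1)

lemma ofBi_toBi (p : MvPolynomial (Fin 2) ℝ) : ofBi (toBi p) = p := by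
  induction p using MvPolynomial.induction_on with
  | C a =>
    have : toBi (C a) = Polynomial.C (Polynomial.C a) := by
      simp [toBi]
    rw [this]
    simp [ofBi, MvPolynomial.algebraMap_eq]
  | add p q hp hq => rw [map_add, map_add, hp, hq]
  | mul_X p i hp =>
    rw [map_mul, map_mul, hp]
    congr 1
    fin_cases i <;> simp [toBi, ofBi]

lemma toBi_ofBi (p : Polynomial (Polynomial ℝ)) : toBi (ofBi p) = p := by
  have h1 : ∀ a : Polynomial ℝ, toBi (Polynomial.aeval (X 0 : MvPolynomial (Fin 2) ℝ) a)
      = Polynomial.C a := by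
    intro a
    induction a using Polynomial.induction_on' with
    | add p q hp hq => rw [map_add, map_add, hp, hq, map_add]
    | monomial n c =>
      rw [Polynomial.aeval_monomial, map_mul, map_pow, MvPolynomial.algebraMap_eq]
      have : toBi (C c) = Polynomial.C (Polynomial.C c) := by
        simp [toBi]
      rw [this, ← Polynomial.C_mul_X_pow_eq_monomial]
      simp [toBi]
  induction p using Polynomial.induction_on' with
  | add p q hp hq => rw [map_add, map_add, hp, hq]
  | monomial n c =>
    have : ofBi (Polynomial.monomial n c) = Polynomial.aeval (X 0 : MvPolynomial (Fin 2) ℝ) c * X 1 ^ n := by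
      simp [ofBi]
    rw [this, map_mul, map_pow, h1, ← Polynomial.C_mul_X_pow_eq_monomial]
    simp [toBi]

noncomputable def biEquiv : MvPolynomial (Fin 2) ℝ ≃* Polynomial (Polynomial ℝ) where
  toFun := toBi
  invFun := ofBi
  left_inv := ofBi_toBi
  right_inv := toBi_ofBi
  map_mul' := map_mul toBi

lemma toBi_inj : Function.Injective toBi := biEquiv.injective

lemma toBi_dvd {p q : MvPolynomial (Fin 2) ℝ} : toBi p ∣ toBi q ↔ p ∣ q :=
  map_dvd_iff biEquiv

lemma toBi_pderiv (p : MvPolynomial (Fin 2) ℝ) :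
    toBi (pderiv 1 p) = Polynomial.derivative (toBi p) := by
  induction p using MvPolynomial.induction_on with
  | C a =>
    have : toBi (C a) = Polynomial.C (Polynomial.C a) := by
      simp [toBi]
    rw [this]; simp
  | add p q hp hq => simp only [map_add, hp, hq]
  | mul_X p i hp =>
    rw [Derivation.leibniz, map_mul, Polynomial.derivative_mul]
    simp only [smul_eq_mul, map_add, map_mul, hp]
    fin_cases i
    · simp [toBi, mul_comm, pderiv_X]
    · simp [toBi, mul_comm, pderiv_X, add_comm]

lemma pev_eq_toBi (p : MvPolynomial (Fin 2) ℝ) (v : ℝ × ℝ) :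
    pev p v = ((toBi p).eval (Polynomial.C v.2)).eval v.1 := by
  induction p using MvPolynomial.induction_on with
  | C a =>
    have : toBi (C a) = Polynomial.C (Polynomial.C a) := by
      simp [toBi]
    rw [this]; simp [pev]
  | add p q hp hq => 
    simp only [pev] at *
    simp only [map_add, hp, hq, Polynomial.eval_add]
  | mul_X p i hp =>
    simp only [pev] at *
    rw [map_mul, map_mul, hp, Polynomial.eval_mul, Polynomial.eval_mul]
    fin_cases i <;> simp [toBi]

lemma pev_mul (p q : MvPolynomial (Fin 2) ℝ) (v : ℝ × ℝ) : pev (p * q) v = pev p v * pev q v := by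
  simp [pev]
lemma pev_add (p q : MvPolynomial (Fin 2) ℝ) (v : ℝ × ℝ) : pev (p + q) v = pev p v + pev q v := by
  simp [pev]
lemma pev_sub (p q : MvPolynomial (Fin 2) ℝ) (v : ℝ × ℝ) : pev (p - q) v = pev p v - pev q v := by
  simp [pev]
lemma pev_C (a : ℝ) (v : ℝ × ℝ) : pev (C a) v = a := by
  simp [pev]
lemma pev_X0 (v : ℝ × ℝ) : pev (X 0) v = v.1 := by
  simp [pev]
lemma pev_X1 (v : ℝ × ℝ) : pev (X 1) v = v.2 := by
  simp [pev]
lemma pev_zero (v : ℝ × ℝ) : pev 0 v = 0 := by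
  simp [pev]

lemma pev_cont (p : MvPolynomial (Fin 2) ℝ) : Continuous (pev p) := by
  unfold pev
  have := MvPolynomial.continuous_eval p
  refine this.comp ?_
  refine continuous_pi fun i => ?_
  fin_cases i
  · exact continuous_fst
  · exact continuous_snd



noncomputable def slice (x : ℝ) (p : MvPolynomial (Fin 2) ℝ) : Polynomial ℝ :=
  (toBi p).map (Polynomial.evalRingHom x)

lemma slice_eval (x y : ℝ) (p : MvPolynomial (Fin 2) ℝ) : (slice x p).eval y = pev p (x, y) := by
  rw [pev_eq_toBi, slice, Polynomial.eval_map, Polynomial.eval₂_eq_eval_map]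
  rw [← Polynomial.coe_evalRingHom x, ← Polynomial.coe_evalRingHom (Polynomial.C _), Polynomial.coe_evalRingHom x]
  induction (toBi p) using Polynomial.induction_on' with
  | add p q hp hq => simp_all
  | monomial n c => simp

lemma slice_deriv (x : ℝ) (p : MvPolynomial (Fin 2) ℝ) :
    slice x (pderiv 1 p) = Polynomial.derivative (slice x p) := by
  rw [slice, slice, toBi_pderiv, Polynomial.derivative_map]

lemma slice_deriv_iter (x : ℝ) (p : MvPolynomial (Fin 2) ℝ) (i : ℕ) :
    slice x ((pderiv 1)^[i] p) = Polynomial.derivative^[i] (slice x p) := by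
  induction i with
  | zero => rfl
  | succ n ih => rw [Function.iterate_succ_apply', Function.iterate_succ_apply', slice_deriv, ih]

lemma toBi_deriv_iter (p : MvPolynomial (Fin 2) ℝ) (i : ℕ) :
    toBi ((pderiv 1)^[i] p) = Polynomial.derivative^[i] (toBi p) := by
  induction i with
  | zero => rfl
  | succ n ih => rw [Function.iterate_succ_apply', Function.iterate_succ_apply', toBi_pderiv, ih]

lemma deriv_iter_not_dvd (H : MvPolynomial (Fin 2) ℝ) (i : ℕ) (hi : 1 ≤ i) :
    (pderiv 1)^[i] H = 0 ∨ ¬ H ∣ (pderiv 1)^[i] H := by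
  by_contra! hcon
  obtain ⟨h0, h1⟩ := hcon
  have h0' : Polynomial.derivative^[i] (toBi H) ≠ 0 := by
    rw [← toBi_deriv_iter]; intro h; exact h0 (toBi_inj (by rw [h, map_zero]))
  rw [← toBi_dvd, toBi_deriv_iter] at h1
  have h2 := Polynomial.natDegree_le_of_dvd h1 h0'
  have h3 := Polynomial.natDegree_iterate_derivative (toBi H) i
  have h4 : (toBi H).natDegree = 0 := by omega
  apply h0'
  apply Polynomial.iterate_derivative_eq_zero
  omega

lemma deriv_iter_eq_zero (H : MvPolynomial (Fin 2) ℝ) : ∃ N, ∀ i, N ≤ i → (pderiv 1)^[i] H = 0 := by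
  refine ⟨(toBi H).natDegree + 1, fun i hi => toBi_inj ?_⟩
  rw [toBi_deriv_iter, map_zero]
  apply Polynomial.iterate_derivative_eq_zero
  omega



lemma elim_bi (I G : Polynomial (Polynomial ℝ)) (hI : Irreducible I) (hG : ¬ I ∣ G) :
    ∃ D : Polynomial ℝ, D ≠ 0 ∧ ∃ u v, Polynomial.C D = u * I + v * G := by
  have hp : Prime I := hI.prime
  have : Fact (Irreducible I) := ⟨hI⟩
  have : IsDomain (AdjoinRoot I) := AdjoinRoot.isDomain_of_prime hp
  have halg : ∀ F : Polynomial (Polynomial ℝ), IsAlgebraic (Polynomial ℝ) (AdjoinRoot.mk I F) := by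
    intro F
    induction F using Polynomial.induction_on' with
    | add p q hp hq => rw [map_add]; exact hp.add hq
    | monomial n c =>
      rw [← Polynomial.C_mul_X_pow_eq_monomial, map_mul, map_pow]
      refine IsAlgebraic.mul ?_ (IsAlgebraic.pow ?_ n)
      · exact isAlgebraic_algebraMap c
      · exact AdjoinRoot.isAlgebraic_root hI.ne_zero
  have hne : AdjoinRoot.mk I G ≠ 0 := by
    rw [Ne, AdjoinRoot.mk_eq_zero]; exact hG
  obtain ⟨D, hD, hdvd⟩ := (halg G).exists_nonzero_dvd (mem_nonZeroDivisors_of_ne_zero hne)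
  obtain ⟨v, hv⟩ := hdvd
  obtain ⟨v, rfl⟩ := AdjoinRoot.mk_surjective v
  have : AdjoinRoot.mk I (Polynomial.C D - G * v) = 0 := by
    rw [map_sub, map_mul, ← hv, sub_eq_zero]; rfl
  rw [AdjoinRoot.mk_eq_zero] at this
  obtain ⟨u, hu⟩ := this
  exact ⟨D, hD, u, v, by linear_combination hu⟩

lemma elim_fst (i r : MvPolynomial (Fin 2) ℝ) (hi : Irreducible i) (hr : ¬ i ∣ r) :
    ∃ D : Polynomial ℝ, D ≠ 0 ∧ ∀ v, pev i v = 0 → pev r v = 0 → D.eval v.1 = 0 := by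
  obtain ⟨D, hD, u, w, h⟩ := elim_bi (toBi i) (toBi r)
    ((MulEquiv.irreducible_iff biEquiv).2 hi) (by rwa [toBi_dvd])
  refine ⟨D, hD, fun v h1 h2 => ?_⟩
  rw [pev_eq_toBi] at h1 h2
  have := congrArg (fun P => (Polynomial.eval (Polynomial.C v.2) P).eval v.1) h
  simpa [h1, h2] using this

noncomputable def sw : MvPolynomial (Fin 2) ℝ ≃ₐ[ℝ] MvPolynomial (Fin 2) ℝ :=
  MvPolynomial.renameEquiv ℝ (Equiv.swap 0 1)

lemma pev_sw (p : MvPolynomial (Fin 2) ℝ) (v : ℝ × ℝ) : pev (sw p) v = pev p v.swap := by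
  simp only [pev, sw, MvPolynomial.renameEquiv_apply, MvPolynomial.eval_rename]
  congr 2
  ext i
  fin_cases i <;> simp

lemma elim_snd (i r : MvPolynomial (Fin 2) ℝ) (hi : Irreducible i) (hr : ¬ i ∣ r) :
    ∃ D : Polynomial ℝ, D ≠ 0 ∧ ∀ v, pev i v = 0 → pev r v = 0 → D.eval v.2 = 0 := by
  obtain ⟨D, hD, h⟩ := elim_fst (sw i) (sw r) ((MulEquiv.irreducible_iff sw).2 hi)
    (by rwa [map_dvd_iff])
  refine ⟨D, hD, fun v h1 h2 => ?_⟩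
  have := h v.swap
  rw [pev_sw, pev_sw, Prod.swap_swap] at this
  exact this h1 h2

lemma poly_ne_near (D : Polynomial ℝ) (hD : D ≠ 0) (a : ℝ) : ∀ᶠ x in 𝓝 a, x ≠ a → D.eval x ≠ 0 := by
  have h : ({x | D.IsRoot x} \ {a}).Finite := (Polynomial.finite_setOfPred_isRoot hD).subset Set.sdiff_subset
  have := h.isClosed.isOpen_compl.mem_nhds (show a ∈ _ by simp)
  filter_upwards [this] with x hx hxa h0
  exact hx ⟨h0, hxa⟩

lemma no_common_irr (i r : MvPolynomial (Fin 2) ℝ) (hi : Irreducible i) (hr : ¬ i ∣ r) (v₀ : ℝ × ℝ) :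
    ∀ᶠ v in 𝓝 v₀, v ≠ v₀ → pev i v = 0 → pev r v ≠ 0 := by
  obtain ⟨D, hD, h⟩ := elim_fst i r hi hr
  obtain ⟨E, hE, h'⟩ := elim_snd i r hi hr
  have h1 := (continuous_fst.tendsto v₀).eventually (poly_ne_near D hD v₀.1)
  have h2 := (continuous_snd.tendsto v₀).eventually (poly_ne_near E hE v₀.2)
  filter_upwards [h1, h2] with v a1 a2 hv b1 b2
  apply hv
  apply Prod.ext
  · by_contra hh; exact a1 hh (h v b1 b2)
  · by_contra hh; exact a2 hh (h' v b1 b2)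

lemma no_common (r s : MvPolynomial (Fin 2) ℝ) (hs : s ≠ 0)
    (hc : ∀ e : MvPolynomial (Fin 2) ℝ, e ∣ r → e ∣ s → IsUnit e) (v₀ : ℝ × ℝ) :
    ∀ᶠ v in 𝓝 v₀, v ≠ v₀ → pev s v = 0 → pev r v ≠ 0 := by
  induction s using WfDvdMonoid.induction_on_irreducible with
  | zero => exact absurd rfl hs
  | unit u hu =>
    refine Eventually.of_forall fun v _ h => ?_
    exfalso
    obtain ⟨w, hw⟩ := hu.exists_right_inv
    have := congrArg (fun p => pev p v) hw
    simp only [pev_mul, h] at this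
    simp [pev] at this
  | mul a i ha hi ih =>
    have h1 := ih ha (fun e he h => hc e he (h.mul_left _))
    have h2 := no_common_irr i r hi (fun h => hi.not_isUnit (hc i h (dvd_mul_right _ _))) v₀
    filter_upwards [h1, h2] with v b1 b2 hv hz
    rw [pev_mul, mul_eq_zero] at hz
    rcases hz with hz | hz
    · exact b2 hv hz
    · exact b1 hv hz

lemma exists_irr_factor (H : MvPolynomial (Fin 2) ℝ) (hH : H ≠ 0) (w : ℕ → ℝ × ℝ)
    (hw : ∃ᶠ n in atTop, pev H (w n) = 0) :
    ∃ i : MvPolynomial (Fin 2) ℝ, Irreducible i ∧ ∃ᶠ n in atTop, pev i (w n) = 0 := by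
  induction H using WfDvdMonoid.induction_on_irreducible with
  | zero => exact absurd rfl hH
  | unit u hu =>
    exfalso
    obtain ⟨n, h⟩ := hw.exists
    obtain ⟨t, ht⟩ := hu.exists_right_inv
    have := congrArg (fun p => pev p (w n)) ht
    simp only [pev_mul, h] at this
    simp [pev] at this
  | mul a i ha hi ih =>
    simp only [pev_mul, mul_eq_zero] at hw
    rw [frequently_or_distrib] at hw
    rcases hw with h | h
    · exact ⟨i, hi, h⟩
    · exact ih ha h

lemma dense_ne (s : MvPolynomial (Fin 2) ℝ) (hs : s ≠ 0) (v : ℝ × ℝ) :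
    v ∈ closure {u | pev s u ≠ 0} := by
  by_contra hcon
  rw [mem_closure_iff_frequently, not_frequently] at hcon
  simp only [Set.mem_ofPred_eq, not_not] at hcon
  obtain ⟨ε, hε, h⟩ := Metric.eventually_nhds_iff_ball.1 hcon
  apply hs
  refine MvPolynomial.funext_set (fun i => Metric.ball (![v.1, v.2] i) ε) (fun i => ?_) (fun x hx => ?_)
  · rw [Real.ball_eq_Ioo]
    exact Set.Ioo_infinite (by linarith)
  · have h0 := hx 0 trivial
    have h1 := hx 1 trivial
    have := h (x 0, x 1) (by
      rw [← ball_prod_same]; exact ⟨by simpa using h0, by simpa using h1⟩)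
    simp only [pev] at this
    rw [map_zero, ← this]
    have hx' : x = ![x 0, x 1] := by
      funext i
      fin_cases i <;> rfl
    rw [← hx']

lemma den_ne (r s : MvPolynomial (Fin 2) ℝ) (hs : s ≠ 0)
    (hc : ∀ e : MvPolynomial (Fin 2) ℝ, e ∣ r → e ∣ s → IsUnit e) (v₀ : ℝ × ℝ)
    (hb : BoundedNear r s v₀) : ∀ᶠ v in 𝓝 v₀, v ≠ v₀ → pev s v ≠ 0 := by
  obtain ⟨U, hU, M, hM⟩ := hb
  filter_upwards [no_common r s hs hc v₀, eventually_mem_nhds_iff.2 hU] with v h1 h2 hv hz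
  apply h1 hv hz
  obtain ⟨t, ht, htv⟩ := mem_closure_iff_seq_limit.1 (dense_ne s hs v)
  have hr : Tendsto (fun n => |pev r (t n)|) atTop (𝓝 |pev r v|) :=
    (((pev_cont r).tendsto v).comp htv).abs
  have hs' : Tendsto (fun n => M * |pev s (t n)|) atTop (𝓝 (M * |pev s v|)) :=
    (((pev_cont s).tendsto v).comp htv).abs.const_mul M
  have hle : |pev r v| ≤ M * |pev s v| := by
    refine le_of_tendsto_of_tendsto hr hs' ?_
    filter_upwards [htv.eventually h2] with n hn
    have := hM _ hn (ht n)
    rw [abs_div, div_le_iff₀ (abs_pos.2 (ht n))] at this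
    exact this
  rw [hz] at hle
  simpa using hle



lemma thom_aux (n : ℕ) : ∀ (P : Polynomial ℝ), P.natDegree ≤ n → ∀ a b : ℝ, a < b →
    (∀ i : ℕ, SignType.sign ((Polynomial.derivative^[i] P).eval a) =
      SignType.sign ((Polynomial.derivative^[i] P).eval b)) →
    ∀ y ∈ Set.Icc a b, SignType.sign (P.eval y) = SignType.sign (P.eval a) := by
  induction n with
  | zero =>
    intro P hP a b _ _ y _
    rw [Polynomial.eq_C_of_natDegree_le_zero hP]
    simp
  | succ n ih =>
    intro P hP a b hab hs y hy
    have hd : (Polynomial.derivative P).natDegree ≤ n := by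
      have := Polynomial.natDegree_derivative_le P
      omega
    have h1 := ih (Polynomial.derivative P) hd a b hab (fun i => by
      have := hs (i + 1)
      simpa only [Function.iterate_succ_apply] using this)
    have h0 := hs 0
    simp only [Function.iterate_zero, id] at h0
    rcases le_or_gt 0 ((Polynomial.derivative P).eval a) with hpos | hneg
    · have hmono : MonotoneOn (fun t => P.eval t) (Set.Icc a b) := by
        refine monotoneOn_of_deriv_nonneg (convex_Icc a b) P.continuous.continuousOn
          P.differentiable.differentiableOn (fun t ht => ?_)
        rw [interior_Icc] at ht
        rw [Polynomial.deriv]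
        have := h1 t ⟨ht.1.le, ht.2.le⟩
        rw [← sign_nonneg_iff, this, sign_nonneg_iff]
        exact hpos
      have e1 := hmono ⟨le_rfl, hab.le⟩ hy hy.1
      have e2 := hmono hy ⟨hab.le, le_rfl⟩ hy.2
      apply le_antisymm
      · rw [h0]; exact SignType.sign.monotone e2
      · exact SignType.sign.monotone e1
    · have hmono : AntitoneOn (fun t => P.eval t) (Set.Icc a b) := by
        refine antitoneOn_of_deriv_nonpos (convex_Icc a b) P.continuous.continuousOn
          P.differentiable.differentiableOn (fun t ht => ?_)
        rw [interior_Icc] at ht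
        rw [Polynomial.deriv]
        have := h1 t ⟨ht.1.le, ht.2.le⟩
        rw [← sign_nonpos_iff, this, sign_nonpos_iff]
        exact hneg.le
      have e1 := hmono ⟨le_rfl, hab.le⟩ hy hy.1
      have e2 := hmono hy ⟨hab.le, le_rfl⟩ hy.2
      apply le_antisymm
      · exact SignType.sign.monotone e1
      · rw [h0]; exact SignType.sign.monotone e2

lemma thom_lt (H : MvPolynomial (Fin 2) ℝ) (x y y' : ℝ) (hlt : y < y')
    (h : pev H (x, y) = 0) (h' : pev H (x, y') = 0) (h1 : pev (pderiv 1 H) (x, y) ≠ 0)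
    (hs : ∀ i, 1 ≤ i → SignType.sign (pev ((pderiv 1)^[i] H) (x, y)) =
      SignType.sign (pev ((pderiv 1)^[i] H) (x, y'))) : False := by
  have key := thom_aux _ (Polynomial.derivative (slice x H)) le_rfl y y' hlt (fun i => by
    have := hs (i + 1) (by omega)
    rw [← slice_eval, ← slice_eval, slice_deriv_iter] at this
    simpa only [Function.iterate_succ_apply] using this)
  obtain ⟨t, ht, h0⟩ := exists_deriv_eq_zero (f := fun t => (slice x H).eval t) hlt
    (slice x H).continuous.continuousOn (by simp only [slice_eval, h, h'])
  rw [Polynomial.deriv] at h0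
  have := key t ⟨ht.1.le, ht.2.le⟩
  rw [h0, sign_zero, eq_comm, sign_eq_zero_iff, ← slice_deriv, slice_eval] at this
  exact h1 this

lemma thom_unique (H : MvPolynomial (Fin 2) ℝ) (x y y' : ℝ)
    (h : pev H (x, y) = 0) (h' : pev H (x, y') = 0) (h1 : pev (pderiv 1 H) (x, y) ≠ 0)
    (h1' : pev (pderiv 1 H) (x, y') ≠ 0)
    (hs : ∀ i, 1 ≤ i → SignType.sign (pev ((pderiv 1)^[i] H) (x, y)) =
      SignType.sign (pev ((pderiv 1)^[i] H) (x, y'))) : y = y' := by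
  rcases lt_trichotomy y y' with hlt | heq | hlt
  · exact (thom_lt H x y y' hlt h h' h1 hs).elim
  · exact heq
  · exact (thom_lt H x y' y hlt h' h h1' (fun i hi => (hs i hi).symm)).elim



lemma sgn_near (Q : MvPolynomial (Fin 2) ℝ) (v : ℝ × ℝ) (h : Q = 0 ∨ pev Q v ≠ 0) :
    ∀ᶠ u in 𝓝 v, SignType.sign (pev Q u) = SignType.sign (pev Q v) := by
  rcases h with rfl | h
  · exact Eventually.of_forall fun u => by rw [pev_zero, pev_zero]
  · have h1 : ContinuousAt (fun u => SignType.sign (pev Q u)) v :=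
      ContinuousAt.comp (f := pev Q) (continuousAt_sign_of_ne_zero h) (pev_cont Q).continuousAt
    exact h1 ((isOpen_discrete {SignType.sign (pev Q v)}).mem_nhds rfl)

lemma sgn_near_all (H : MvPolynomial (Fin 2) ℝ) (v : ℝ × ℝ)
    (h : ∀ i, 1 ≤ i → (pderiv 1)^[i] H = 0 ∨ pev ((pderiv 1)^[i] H) v ≠ 0) :
    ∀ᶠ u in 𝓝 v, ∀ i, 1 ≤ i → SignType.sign (pev ((pderiv 1)^[i] H) u) =
      SignType.sign (pev ((pderiv 1)^[i] H) v) := by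
  obtain ⟨N, hN⟩ := deriv_iter_eq_zero H
  have h1 : ∀ᶠ u in 𝓝 v, ∀ i ∈ Finset.Ico 1 N, SignType.sign (pev ((pderiv 1)^[i] H) u) =
      SignType.sign (pev ((pderiv 1)^[i] H) v) := by
    rw [Filter.eventually_all_finset]
    intro i hi
    exact sgn_near _ _ (h i (Finset.mem_Ico.1 hi).1)
  filter_upwards [h1] with u hu i hi
  by_cases hiN : i < N
  · exact hu i (Finset.mem_Ico.2 ⟨hi, hiN⟩)
  · rw [hN i (by omega), pev_zero, pev_zero]

lemma root_near (H : MvPolynomial (Fin 2) ℝ) (x y : ℝ) (h : pev H (x, y) = 0)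
    (h1 : pev (pderiv 1 H) (x, y) ≠ 0) (V : Set ℝ) (hV : V ∈ 𝓝 y) :
    ∀ᶠ x' in 𝓝 x, ∃ y' ∈ V, pev H (x', y') = 0 := by
  obtain ⟨ε, hε, hball⟩ := Metric.mem_nhds_iff.1 hV
  have hd : deriv (fun t => (slice x H).eval t) y = pev (pderiv 1 H) (x, y) := by
    rw [Polynomial.deriv, ← slice_deriv, slice_eval]
  have hz : (slice x H).eval y = 0 := by rw [slice_eval, h]
  have hcont : ∀ t, Continuous (fun x' => pev H (x', t)) := fun t => (pev_cont H).comp (by fun_prop)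
  have hcont' : ∀ t, Continuous (fun y' => pev H (t, y')) := fun t => (pev_cont H).comp (by fun_prop)

  obtain ⟨y1, y2, hy1, hy2, hle, hopp⟩ : ∃ y1 y2, y1 ∈ Metric.ball y ε ∧ y2 ∈ Metric.ball y ε ∧ y1 ≤ y2 ∧
      ((pev H (x, y1) < 0 ∧ 0 < pev H (x, y2)) ∨ (0 < pev H (x, y1) ∧ pev H (x, y2) < 0)) := by
    have near : ∀ s : ℝ → Prop, (∀ᶠ t in 𝓝 y, s t) →
        ∃ y1 y2, y1 ∈ Metric.ball y ε ∧ y2 ∈ Metric.ball y ε ∧ y1 < y ∧ y < y2 ∧ s y1 ∧ s y2 := by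
      intro s hs
      have := hs.and (Metric.ball_mem_nhds y hε)
      obtain ⟨η, hη, hb⟩ := Metric.eventually_nhds_iff_ball.1 this
      have b1 := hb (y - η / 2) (by rw [Real.ball_eq_Ioo]; constructor <;> linarith)
      have b2 := hb (y + η / 2) (by rw [Real.ball_eq_Ioo]; constructor <;> linarith)
      exact ⟨_, _, b1.2, b2.2, by linarith, by linarith, b1.1, b2.1⟩
    rcases lt_or_gt_of_ne h1 with hneg | hpos
    · have := eventually_nhdsWithin_sign_eq_of_deriv_neg (hd ▸ hneg) hz
      obtain ⟨y1, y2, m1, m2, l1, l2, s1, s2⟩ := near _ this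
      refine ⟨y1, y2, m1, m2, by linarith, Or.inr ⟨?_, ?_⟩⟩
      · rw [slice_eval, sign_pos (by linarith : 0 < y - y1), sign_eq_one_iff] at s1
        exact s1
      · rw [slice_eval, sign_neg (by linarith : y - y2 < 0), sign_eq_neg_one_iff] at s2
        exact s2
    · have := eventually_nhdsWithin_sign_eq_of_deriv_pos (hd ▸ hpos) hz
      obtain ⟨y1, y2, m1, m2, l1, l2, s1, s2⟩ := near _ this
      refine ⟨y1, y2, m1, m2, by linarith, Or.inl ⟨?_, ?_⟩⟩
      · rw [slice_eval, sign_neg (by linarith : y1 - y < 0), sign_eq_neg_one_iff] at s1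
        exact s1
      · rw [slice_eval, sign_pos (by linarith : 0 < y2 - y), sign_eq_one_iff] at s2
        exact s2
  have hsub : Set.Icc y1 y2 ⊆ Metric.ball y ε := by
    rw [Real.ball_eq_Ioo] at *
    exact fun t ht => ⟨lt_of_lt_of_le hy1.1 ht.1, lt_of_le_of_lt ht.2 hy2.2⟩
  rcases hopp with ⟨o1, o2⟩ | ⟨o1, o2⟩
  · filter_upwards [(hcont y1).continuousAt.eventually_lt_const o1,
      (hcont y2).continuousAt.eventually_const_lt o2] with x' a1 a2
    obtain ⟨y', hy', h0⟩ := intermediate_value_Icc hle (hcont' x').continuousOn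
      (show (0 : ℝ) ∈ _ from ⟨a1.le, a2.le⟩)
    exact ⟨y', hball (hsub hy'), h0⟩
  · filter_upwards [(hcont y1).continuousAt.eventually_const_lt o1,
      (hcont y2).continuousAt.eventually_lt_const o2] with x' a1 a2
    obtain ⟨y', hy', h0⟩ := intermediate_value_Icc' hle (hcont' x').continuousOn
      (show (0 : ℝ) ∈ _ from ⟨a2.le, a1.le⟩)
    exact ⟨y', hball (hsub hy'), h0⟩

lemma core (H h : MvPolynomial (Fin 2) ℝ) (a b c e : ℝ)
    (hH : ∀ x ∈ Set.Ioo a b, ∀ y ∈ Set.Icc c e, pev H (x, y) = 0 → ∀ i, 1 ≤ i →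
      (pderiv 1)^[i] H = 0 ∨ pev ((pderiv 1)^[i] H) (x, y) ≠ 0)
    (h1 : ∀ x ∈ Set.Ioo a b, ∀ y ∈ Set.Icc c e, pev H (x, y) = 0 → pev (pderiv 1 H) (x, y) ≠ 0)
    (hc : ∀ x ∈ Set.Ioo a b, pev H (x, c) ≠ 0) (he : ∀ x ∈ Set.Ioo a b, pev H (x, e) ≠ 0)
    (hh : ∀ x ∈ Set.Ioo a b, ∀ y ∈ Set.Icc c e, pev H (x, y) = 0 → pev h (x, y) ≠ 0)
    (x y x' y' : ℝ) (hx : x ∈ Set.Ioo a b) (hx' : x' ∈ Set.Ioo a b) (hy : y ∈ Set.Icc c e)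
    (hy' : y' ∈ Set.Icc c e) (hz : pev H (x, y) = 0) (hz' : pev H (x', y') = 0)
    (hs : ∀ i, 1 ≤ i → SignType.sign (pev ((pderiv 1)^[i] H) (x, y)) =
      SignType.sign (pev ((pderiv 1)^[i] H) (x', y'))) :
    SignType.sign (pev h (x, y)) = SignType.sign (pev h (x', y')) := by
  let G : ℝ → ℝ → Prop := fun s t => pev H (s, t) = 0 ∧
    (∀ i, 1 ≤ i → SignType.sign (pev ((pderiv 1)^[i] H) (s, t)) =
      SignType.sign (pev ((pderiv 1)^[i] H) (x, y))) ∧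
    SignType.sign (pev h (s, t)) = SignType.sign (pev h (x, y))
  let A : Set ℝ := {s | s ∈ Set.Ioo a b ∧ ∃ t ∈ Set.Icc c e, G s t}
  have hAopen : IsOpen A := by
    rw [isOpen_iff_mem_nhds]
    rintro s ⟨hs1, t, ht, g1, g2, g3⟩
    have n1 := sgn_near_all H (s, t) (hH s hs1 t ht g1)
    have n2 := sgn_near h (s, t) (Or.inr (hh s hs1 t ht g1))
    have htc : t ≠ c := by rintro rfl; exact hc s hs1 g1
    have hte : t ≠ e := by rintro rfl; exact he s hs1 g1
    have ht' : t ∈ Set.Ioo c e := ⟨lt_of_le_of_ne ht.1 (Ne.symm htc), lt_of_le_of_ne ht.2 hte⟩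
    have n3 := n1.and n2
    rw [nhds_prod_eq] at n3
    obtain ⟨pa, hpa, pb, hpb, hab⟩ := eventually_prod_iff.1 n3
    filter_upwards [hpa, isOpen_Ioo.mem_nhds hs1,
      root_near H s t g1 (h1 s hs1 t ht g1) _ (inter_mem hpb (isOpen_Ioo.mem_nhds ht'))]
      with s' b1 b2 ⟨t', b3, b4⟩
    have := hab b1 b3.1
    exact ⟨b2, t', ⟨b3.2.1.le, b3.2.2.le⟩, b4, fun i hi => (this.1 i hi).trans (g2 i hi),
      this.2.trans g3⟩
  have hAcl : IsOpen (Set.Ioo a b ∩ (closure A)ᶜ) := isOpen_Ioo.inter isClosed_closure.isOpen_compl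
  have hcl : ∀ s ∈ Set.Ioo a b, s ∈ closure A → s ∈ A := by
    intro s hs1 hs2
    obtain ⟨σ, hσ, hlim⟩ := mem_closure_iff_seq_limit.1 hs2
    choose hσ1 τ hτ hG using hσ
    obtain ⟨t, ht, φ, hφ, hlimt⟩ := isCompact_Icc.tendsto_subseq hτ
    have hl : Tendsto (fun n => (σ (φ n), τ (φ n))) atTop (𝓝 (s, t)) := by
      rw [nhds_prod_eq]
      exact (hlim.comp hφ.tendsto_atTop).prodMk hlimt
    have hz0 : pev H (s, t) = 0 := by
      have l1 := ((pev_cont H).tendsto (s, t)).comp hl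
      refine tendsto_nhds_unique l1 ?_
      have : (pev H ∘ fun n => (σ (φ n), τ (φ n))) = fun _ => 0 := by
        funext n; exact (hG (φ n)).1
      rw [this]; exact tendsto_const_nhds
    have n1 := hl.eventually (sgn_near_all H (s, t) (hH s hs1 t ht hz0))
    have n2 := hl.eventually (sgn_near h (s, t) (Or.inr (hh s hs1 t ht hz0)))
    obtain ⟨n, m1, m2⟩ := (n1.and n2).exists
    exact ⟨hs1, t, ht, hz0, fun i hi => (m1 i hi).symm.trans ((hG (φ n)).2.1 i hi),
      m2.symm.trans (hG (φ n)).2.2⟩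
  have hsub : Set.Ioo a b ⊆ A := by
    refine isPreconnected_Ioo.subset_left_of_subset_union hAopen hAcl ?_ ?_ ⟨x, hx, hx, y, hy, hz, fun _ _ => rfl, rfl⟩
    · rw [Set.disjoint_left]
      exact fun s hs1 hs2 => hs2.2 (subset_closure hs1)
    · intro s hs1
      by_cases hs2 : s ∈ closure A
      · exact Or.inl (hcl s hs1 hs2)
      · exact Or.inr ⟨hs1, hs2⟩
  obtain ⟨-, t, ht, g1, g2, g3⟩ := hsub hx'
  have : t = y' := thom_unique H x' t y' g1 hz' (h1 x' hx' t ht g1) (h1 x' hx' y' hy' hz')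
    (fun i hi => (g2 i hi).trans (hs i hi))
  rw [← g3, this]



def GoodSeq (w : ℕ → ℝ × ℝ) : Prop :=
  ∀ h : MvPolynomial (Fin 2) ℝ, ∃ σ : SignType, ∀ᶠ n in atTop, SignType.sign (pev h (w n)) = σ

def HasGood (w : ℕ → ℝ × ℝ) : Prop := ∃ φ : ℕ → ℕ, StrictMono φ ∧ GoodSeq (w ∘ φ)

lemma HasGood.of_sub {w : ℕ → ℝ × ℝ} {ψ : ℕ → ℕ} (hψ : StrictMono ψ) (h : HasGood (w ∘ ψ)) :
    HasGood w := by
  obtain ⟨φ, hφ, hg⟩ := h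
  exact ⟨ψ ∘ φ, hψ.comp hφ, hg⟩

def Side (t : ℕ → ℝ) (t₀ : ℝ) : Prop :=
  ∀ P : ℝ → Prop, (∀ᶠ x in 𝓝 t₀, P x) → ∃ a b, (∀ x ∈ Set.Ioo a b, x ≠ t₀ ∧ P x) ∧
    ∀ᶠ n in atTop, t n ∈ Set.Ioo a b

lemma side_gt (t : ℕ → ℝ) (t₀ : ℝ) (ht : Tendsto t atTop (𝓝 t₀)) (h : ∀ n, t₀ < t n) :
    Side t t₀ := by
  intro P hP
  obtain ⟨ε, hε, hb⟩ := Metric.eventually_nhds_iff_ball.1 hP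
  refine ⟨t₀, t₀ + ε, fun x hx => ⟨hx.1.ne', hb x ?_⟩, ?_⟩
  · rw [Real.ball_eq_Ioo]; exact ⟨by linarith [hx.1], hx.2⟩
  · filter_upwards [ht.eventually_lt_const (show t₀ < t₀ + ε by linarith)] with n hn
    exact ⟨h n, hn⟩

lemma side_lt (t : ℕ → ℝ) (t₀ : ℝ) (ht : Tendsto t atTop (𝓝 t₀)) (h : ∀ n, t n < t₀) :
    Side t t₀ := by
  intro P hP
  obtain ⟨ε, hε, hb⟩ := Metric.eventually_nhds_iff_ball.1 hP
  refine ⟨t₀ - ε, t₀, fun x hx => ⟨hx.2.ne, hb x ?_⟩, ?_⟩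
  · rw [Real.ball_eq_Ioo]; exact ⟨hx.1, by linarith [hx.2]⟩
  · filter_upwards [ht.eventually_const_lt (show t₀ - ε < t₀ by linarith)] with n hn
    exact ⟨hn, h n⟩

lemma lineA (x₀ y₀ : ℝ) (w : ℕ → ℝ × ℝ) (hx : ∀ n, (w n).1 = x₀)
    (hside : Side (fun n => (w n).2) y₀) : GoodSeq w := by
  intro h
  have hw : ∀ n, pev h (w n) = (slice x₀ h).eval (w n).2 := by
    intro n; rw [slice_eval, ← hx n]
  by_cases hP : slice x₀ h = 0
  · refine ⟨0, Eventually.of_forall fun n => ?_⟩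
    rw [hw, hP]; simp
  · obtain ⟨a, b, h1, h2⟩ := hside _ (poly_ne_near _ hP y₀)
    have hcont : ContinuousOn (fun y => SignType.sign ((slice x₀ h).eval y)) (Set.Ioo a b) := by
      intro y hy
      exact (ContinuousAt.comp (f := fun y => (slice x₀ h).eval y)
        (continuousAt_sign_of_ne_zero ((h1 y hy).2 (h1 y hy).1))
        (slice x₀ h).continuous.continuousAt).continuousWithinAt
    obtain ⟨n₀, hn₀⟩ := h2.exists
    refine ⟨SignType.sign ((slice x₀ h).eval (w n₀).2), ?_⟩
    filter_upwards [h2] with n hn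
    rw [hw]
    exact isPreconnected_Ioo.constant hcont hn hn₀

lemma no_common_fst (H h : MvPolynomial (Fin 2) ℝ) (hH : Irreducible H) (hh : ¬ H ∣ h) (x₀ : ℝ) :
    ∀ᶠ x in 𝓝 x₀, x ≠ x₀ → ∀ y, pev H (x, y) = 0 → pev h (x, y) ≠ 0 := by
  obtain ⟨D, hD, hz⟩ := elim_fst H h hH hh
  filter_upwards [poly_ne_near D hD x₀] with x hx hne y h1 h2
  exact hx hne (hz (x, y) h1 h2)

lemma frequently_const {α : Type*} [Finite α] (g : ℕ → α) : ∃ a, ∃ᶠ n in atTop, g n = a := by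
  by_contra! hcon
  have := (eventually_all.2 hcon).exists
  obtain ⟨n, hn⟩ := this
  exact hn (g n) rfl

lemma sideB (H : MvPolynomial (Fin 2) ℝ) (hH : Irreducible H) (x₀ y₀ : ℝ) (w : ℕ → ℝ × ℝ)
    (hw : Tendsto w atTop (𝓝 (x₀, y₀))) (hz : ∀ n, pev H (w n) = 0)
    (hside : Side (fun n => (w n).1) x₀) : HasGood w := by
  have hw2 : Tendsto (fun n => (w n).2) atTop (𝓝 y₀) := (continuous_snd.tendsto _).comp hw
  have hneq : ∃ n, (w n).1 ≠ x₀ := by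
    obtain ⟨a, b, h1, h2⟩ := hside (fun _ => True) (Eventually.of_forall fun _ => trivial)
    obtain ⟨n, hn⟩ := h2.exists
    exact ⟨n, (h1 _ hn).1⟩
  have hz0 : pev H (x₀, y₀) = 0 := by
    have l1 := ((pev_cont H).tendsto (x₀, y₀)).comp hw
    refine tendsto_nhds_unique l1 ?_
    have : (pev H ∘ w) = fun _ => 0 := by
      funext n; exact hz n
    rw [this]; exact tendsto_const_nhds
  have hsl : slice x₀ H ≠ 0 := by
    intro hsl
    have hd : H ∣ X 0 - C x₀ := by
      by_contra hd
      have h1 := no_common_irr H _ hH hd (x₀, y₀)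
      obtain ⟨ε, hε, hb⟩ := Metric.eventually_nhds_iff_ball.1 h1
      refine hb (x₀, y₀ + ε / 2) ?_ ?_ ?_ ?_
      · rw [← ball_prod_same, Real.ball_eq_Ioo, Real.ball_eq_Ioo]
        refine ⟨⟨?_, ?_⟩, ?_, ?_⟩ <;> simp <;> linarith
      · intro h
        have := congrArg Prod.snd h
        simp at this
        linarith
      · rw [← slice_eval, hsl]; simp
      · rw [pev_sub, pev_X0, pev_C]; simp
    obtain ⟨n, hn⟩ := hneq
    obtain ⟨k, hk⟩ := hd
    have := congrArg (fun p => pev p (w n)) hk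
    simp only [pev_sub, pev_X0, pev_C, pev_mul, hz n, zero_mul] at this
    exact hn (by linarith)
  have hd1 : pderiv 1 H ≠ 0 := by
    intro h0
    have hds : Polynomial.derivative (slice x₀ H) = 0 := by
      rw [← slice_deriv, h0]; simp [slice]
    have := Polynomial.derivative_eq_zero.1 hds
    have hC := Polynomial.eq_C_of_natDegree_eq_zero this
    apply hsl
    have e := slice_eval x₀ y₀ H
    rw [hz0, hC, Polynomial.eval_C] at e
    rw [hC, e, map_zero]

  obtain ⟨δ, hδ, hδ1, hδ2⟩ : ∃ δ > 0, pev H (x₀, y₀ - δ) ≠ 0 ∧ pev H (x₀, y₀ + δ) ≠ 0 := by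
    obtain ⟨ε, hε, hb⟩ := Metric.eventually_nhds_iff_ball.1 (poly_ne_near _ hsl y₀)
    refine ⟨ε / 2, by linarith, ?_, ?_⟩
    · rw [← slice_eval]
      exact hb _ (by rw [Real.ball_eq_Ioo]; constructor <;> linarith) (by linarith)
    · rw [← slice_eval]
      exact hb _ (by rw [Real.ball_eq_Ioo]; constructor <;> linarith) (by linarith)
  have hcont : ∀ t, Continuous (fun x' => pev H (x', t)) := fun t => (pev_cont H).comp (by fun_prop)
  have hE1 : ∀ᶠ x in 𝓝 x₀, pev H (x, y₀ - δ) ≠ 0 := (hcont _).continuousAt.eventually_ne hδ1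
  have hE2 : ∀ᶠ x in 𝓝 x₀, pev H (x, y₀ + δ) ≠ 0 := (hcont _).continuousAt.eventually_ne hδ2
  have hE3 : ∀ᶠ x in 𝓝 x₀, x ≠ x₀ → ∀ y, pev H (x, y) = 0 → pev (pderiv 1 H) (x, y) ≠ 0 :=
    no_common_fst H _ hH ((deriv_iter_not_dvd H 1 le_rfl).resolve_left hd1) x₀
  obtain ⟨N, hN⟩ := deriv_iter_eq_zero H
  have hE4 : ∀ᶠ x in 𝓝 x₀, ∀ i ∈ Finset.Ico 1 N, x ≠ x₀ → ∀ y, pev H (x, y) = 0 →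
      ((pderiv 1)^[i] H = 0 ∨ pev ((pderiv 1)^[i] H) (x, y) ≠ 0) := by
    rw [Filter.eventually_all_finset]
    intro i hi
    rcases deriv_iter_not_dvd H i (Finset.mem_Ico.1 hi).1 with h | h
    · exact Eventually.of_forall fun _ _ _ _ => Or.inl h
    · filter_upwards [no_common_fst H _ hH h x₀] with x hx hne y hy
      exact Or.inr (hx hne y hy)
  obtain ⟨σ, hσ⟩ := frequently_const
    (fun n => fun i : Fin N => SignType.sign (pev ((pderiv 1)^[(i : ℕ)] H) (w n)))
  obtain ⟨φ, hφ, hφσ⟩ := extraction_of_frequently_atTop hσ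
  refine ⟨φ, hφ, fun h => ?_⟩
  by_cases hdvd : H ∣ h
  · obtain ⟨k, rfl⟩ := hdvd
    refine ⟨0, Eventually.of_forall fun n => ?_⟩
    simp [pev_mul, hz]
  · obtain ⟨a, b, hab, hev⟩ := hside _ (hE1.and (hE2.and (hE3.and (hE4.and
      (no_common_fst H h hH hdvd x₀)))))
    have hev' := hφ.tendsto_atTop.eventually
      (hev.and (hw2.eventually (Icc_mem_nhds (show y₀ - δ < y₀ by linarith) (show y₀ < y₀ + δ by linarith))))
    obtain ⟨n₀, hn₀, hn₀'⟩ := hev'.exists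
    refine ⟨SignType.sign (pev h (w (φ n₀))), ?_⟩
    filter_upwards [hev'] with n hn
    refine core H h a b (y₀ - δ) (y₀ + δ) ?_ ?_ ?_ ?_ ?_ _ _ _ _ hn.1 hn₀ hn.2 hn₀' (hz _) (hz _) ?_
    · intro x hx y _ hxy i hi
      by_cases hiN : i < N
      · exact (hab x hx).2.2.2.2.1 i (Finset.mem_Ico.2 ⟨hi, hiN⟩) (hab x hx).1 y hxy
      · exact Or.inl (hN i (by omega))
    · intro x hx y _ hxy
      exact (hab x hx).2.2.2.1 (hab x hx).1 y hxy
    · intro x hx; exact (hab x hx).2.1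
    · intro x hx; exact (hab x hx).2.2.1
    · intro x hx y _ hxy
      exact (hab x hx).2.2.2.2.2 (hab x hx).1 y hxy
    · intro i hi
      by_cases hiN : i < N
      · have e1 := congrFun (hφσ n) ⟨i, hiN⟩
        have e2 := congrFun (hφσ n₀) ⟨i, hiN⟩
        exact e1.trans e2.symm
      · rw [hN i (by omega), pev_zero, pev_zero]

lemma key (H : MvPolynomial (Fin 2) ℝ) (hH : H ≠ 0) (x₀ y₀ : ℝ) (w : ℕ → ℝ × ℝ)
    (hw : Tendsto w atTop (𝓝 (x₀, y₀))) (hne : ∀ n, w n ≠ (x₀, y₀))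
    (hz : ∀ n, pev H (w n) = 0) : HasGood w := by
  obtain ⟨i, hi, hf⟩ := exists_irr_factor H hH w (Eventually.of_forall hz).frequently
  have h3 : ∃ᶠ n in atTop, (pev i (w n) = 0 ∧ (w n).1 < x₀) ∨ (pev i (w n) = 0 ∧ x₀ < (w n).1) ∨
      ((w n).1 = x₀ ∧ (w n).2 < y₀) ∨ ((w n).1 = x₀ ∧ y₀ < (w n).2) := by
    refine hf.mono fun n hn => ?_
    rcases lt_trichotomy (w n).1 x₀ with h | h | h
    · exact Or.inl ⟨hn, h⟩
    · rcases lt_trichotomy (w n).2 y₀ with h' | h' | h'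
      · exact Or.inr (Or.inr (Or.inl ⟨h, h'⟩))
      · exact absurd (Prod.ext h h') (hne n)
      · exact Or.inr (Or.inr (Or.inr ⟨h, h'⟩))
    · exact Or.inr (Or.inl ⟨hn, h⟩)
  have sub : ∀ φ : ℕ → ℕ, StrictMono φ → Tendsto (w ∘ φ) atTop (𝓝 (x₀, y₀)) :=
    fun φ hφ => hw.comp hφ.tendsto_atTop
  rw [frequently_or_distrib, frequently_or_distrib, frequently_or_distrib] at h3
  rcases h3 with h | h | h | h
  all_goals
    obtain ⟨φ, hφ, hp⟩ := extraction_of_frequently_atTop h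
    refine HasGood.of_sub hφ ?_
    have hs := sub φ hφ
    have hs1 : Tendsto (fun n => ((w ∘ φ) n).1) atTop (𝓝 x₀) := (continuous_fst.tendsto _).comp hs
    have hs2 : Tendsto (fun n => ((w ∘ φ) n).2) atTop (𝓝 y₀) := (continuous_snd.tendsto _).comp hs
  · exact sideB i hi x₀ y₀ _ hs (fun n => (hp n).1) (side_lt _ _ hs1 fun n => (hp n).2)
  · exact sideB i hi x₀ y₀ _ hs (fun n => (hp n).1) (side_gt _ _ hs1 fun n => (hp n).2)
  · exact ⟨id, strictMono_id, lineA x₀ y₀ _ (fun n => (hp n).1) (side_lt _ _ hs2 fun n => (hp n).2)⟩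
  · exact ⟨id, strictMono_id, lineA x₀ y₀ _ (fun n => (hp n).1) (side_gt _ _ hs2 fun n => (hp n).2)⟩

lemma good_converges (w : ℕ → ℝ × ℝ) (hg : GoodSeq w) (v₀ : ℝ × ℝ) (hw : Tendsto w atTop (𝓝 v₀))
    (r s : MvPolynomial (Fin 2) ℝ) (hs : ∀ᶠ n in atTop, pev s (w n) ≠ 0)
    (hb : BoundedNear r s v₀) :
    ∃ l : ℝ, Tendsto (fun n => pev r (w n) / pev s (w n)) atTop (𝓝 l) := by
  obtain ⟨U, hU, M, hM⟩ := hb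
  have hbd : ∀ᶠ n in atTop, |pev r (w n) / pev s (w n)| ≤ M := by
    filter_upwards [hs, hw.eventually hU] with n h1 h2
    exact hM _ h2 h1
  have hup : IsBoundedUnder (· ≤ ·) atTop (fun n => pev r (w n) / pev s (w n)) :=
    ⟨M, by rw [eventually_map]; filter_upwards [hbd] with n hn; exact (abs_le.1 hn).2⟩
  have hlo : IsBoundedUnder (· ≥ ·) atTop (fun n => pev r (w n) / pev s (w n)) :=
    ⟨-M, by rw [eventually_map]; filter_upwards [hbd] with n hn; exact (abs_le.1 hn).1⟩
  refine tendsto_of_no_upcrossings dense_univ ?_ hup hlo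
  rintro a - b - hab ⟨h1, h2⟩
  obtain ⟨σ, hσ⟩ := hg ((r - C a * s) * s)
  have conv : ∀ n, pev s (w n) ≠ 0 → pev ((r - C a * s) * s) (w n) =
      (pev r (w n) / pev s (w n) - a) * (pev s (w n)) ^ 2 := by
    intro n hn
    rw [pev_mul, pev_sub, pev_mul, pev_C]
    field_simp
  obtain ⟨n, a1, a2, a3⟩ := (h1.and_eventually (hσ.and hs)).exists
  obtain ⟨m, b1, b2, b3⟩ := (h2.and_eventually (hσ.and hs)).exists
  have n1 : pev ((r - C a * s) * s) (w n) < 0 := by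
    rw [conv n a3]
    exact mul_neg_of_neg_of_pos (by linarith) (by positivity)
  have n2 : 0 < pev ((r - C a * s) * s) (w m) := by
    rw [conv m b3]
    exact mul_pos (by linarith) (by positivity)
  rw [sign_neg n1] at a2
  rw [sign_pos n2] at b2
  rw [← b2] at a2
  exact absurd a2 (by decide)



noncomputable def tang (x₀ y₀ : ℝ) : Derivation ℝ (MvPolynomial (Fin 2) ℝ) (MvPolynomial (Fin 2) ℝ) :=
  (X 0 - C x₀ : MvPolynomial (Fin 2) ℝ) • pderiv 1 - (X 1 - C y₀ : MvPolynomial (Fin 2) ℝ) • pderiv 0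

noncomputable def circ (x₀ y₀ ρ θ : ℝ) : ℝ × ℝ := (x₀ + ρ * Real.cos θ, y₀ + ρ * Real.sin θ)

lemma circ_deriv (x₀ y₀ ρ θ : ℝ) (P : MvPolynomial (Fin 2) ℝ) :
    HasDerivAt (fun θ => pev P (circ x₀ y₀ ρ θ)) (pev (tang x₀ y₀ P) (circ x₀ y₀ ρ θ)) θ := by
  induction P using MvPolynomial.induction_on with
  | C a =>
    have : tang x₀ y₀ (C a) = 0 := by
      rw [← MvPolynomial.algebraMap_eq, Derivation.map_algebraMap]
    rw [this, pev_zero]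
    simp only [pev_C]
    exact hasDerivAt_const _ _
  | add p q hp hq =>
    rw [map_add, pev_add]
    simp only [pev_add]
    exact hp.add hq
  | mul_X p i hp =>
    rw [Derivation.leibniz, smul_eq_mul, smul_eq_mul, pev_add, pev_mul, pev_mul]
    simp only [pev_mul]
    have hi : HasDerivAt (fun θ => pev (X i) (circ x₀ y₀ ρ θ))
        (pev (tang x₀ y₀ (X i)) (circ x₀ y₀ ρ θ)) θ := by
      fin_cases i
      · have e : tang x₀ y₀ (X 0) = - (X 1 - C y₀) := by
          simp [tang, pderiv_X]
        simp only [Fin.zero_eta, pev_X0, e]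
        have := ((Real.hasDerivAt_cos θ).const_mul ρ).const_add x₀
        exact this.congr_deriv (by simp [pev, circ])
      · have e : tang x₀ y₀ (X 1) = (X 0 - C x₀) := by
          simp [tang, pderiv_X]
        simp only [Fin.mk_one, pev_X1, e]
        have := ((Real.hasDerivAt_sin θ).const_mul ρ).const_add y₀
        exact this.congr_deriv (by simp [pev, circ])
    exact (hp.fun_mul hi).congr_deriv (by ring)

lemma circ_polar (x₀ y₀ : ℝ) (v : ℝ × ℝ) (hv : v ≠ (x₀, y₀)) :
    ∃ ρ θ, 0 < ρ ∧ v = circ x₀ y₀ ρ θ := by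
  refine ⟨‖(⟨v.1 - x₀, v.2 - y₀⟩ : ℂ)‖, Complex.arg ⟨v.1 - x₀, v.2 - y₀⟩, ?_, ?_⟩
  · rw [norm_pos_iff]
    intro h
    apply hv
    have h1 := congrArg Complex.re h
    have h2 := congrArg Complex.im h
    simp at h1 h2
    exact Prod.ext (by simp; linarith) (by simp; linarith)
  · rw [circ, Complex.norm_mul_cos_arg, Complex.norm_mul_sin_arg]
    simp

lemma circ_ne (x₀ y₀ ρ θ : ℝ) (hρ : 0 < ρ) : circ x₀ y₀ ρ θ ≠ (x₀, y₀) := by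
  intro h
  have h1 := congrArg Prod.fst h
  have h2 := congrArg Prod.snd h
  simp [circ, hρ.ne'] at h1 h2
  have := Real.sin_sq_add_cos_sq θ
  rw [h1, h2] at this
  norm_num at this

lemma circ_dist (x₀ y₀ ρ θ : ℝ) (hρ : 0 < ρ) : dist (circ x₀ y₀ ρ θ) (x₀, y₀) ≤ ρ := by
  rw [Prod.dist_eq]
  simp only [circ, Real.dist_eq, add_sub_cancel_left, abs_mul, abs_of_pos hρ]
  exact max_le (mul_le_of_le_one_right hρ.le (Real.abs_cos_le_one θ))
    (mul_le_of_le_one_right hρ.le (Real.abs_sin_le_one θ))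

lemma circ_dist' (x₀ y₀ ρ θ : ℝ) (hρ : 0 < ρ) : ρ ≤ 2 * dist (circ x₀ y₀ ρ θ) (x₀, y₀) := by
  rw [Prod.dist_eq]
  simp only [circ, Real.dist_eq, add_sub_cancel_left, abs_mul, abs_of_pos hρ]
  have h0 := Real.sin_sq_add_cos_sq θ
  rw [← sq_abs, ← sq_abs (Real.cos θ)] at h0
  have h1 := abs_nonneg (Real.sin θ)
  have h2 := abs_nonneg (Real.cos θ)
  have h3 : 1 ≤ |Real.cos θ| + |Real.sin θ| := by nlinarith
  have h4 := le_max_left (ρ * |Real.cos θ|) (ρ * |Real.sin θ|)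
  have h5 := le_max_right (ρ * |Real.cos θ|) (ρ * |Real.sin θ|)
  nlinarith

lemma exists_curve (p q : MvPolynomial (Fin 2) ℝ) (x₀ y₀ d : ℝ)
    (hq : ∀ᶠ v in 𝓝 (x₀, y₀), v ≠ (x₀, y₀) → pev q v ≠ 0) :
    ∃ H : MvPolynomial (Fin 2) ℝ, H ≠ 0 ∧ ∀ᶠ v in 𝓝 (x₀, y₀), v ≠ (x₀, y₀) →
      ∃ u, u ≠ (x₀, y₀) ∧ dist u (x₀, y₀) ≤ 2 * dist v (x₀, y₀) ∧ pev H u = 0 ∧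
        |pev p u / pev q u - d| ≤ |pev p v / pev q v - d| := by
  obtain ⟨η, hη, hball⟩ := Metric.eventually_nhds_iff_ball.1 hq
  set F := p - C d * q with hF
  set J := tang x₀ y₀ F * q - F * tang x₀ y₀ q with hJ
  have hfd : ∀ u, pev q u ≠ 0 → pev p u / pev q u - d = pev F u / pev q u := by
    intro u hu
    rw [hF, pev_sub, pev_mul, pev_C]
    field_simp
  have hqc : ∀ ρ θ, 0 < ρ → ρ < η → pev q (circ x₀ y₀ ρ θ) ≠ 0 := fun ρ θ h1 h2 =>
    hball _ (lt_of_le_of_lt (circ_dist x₀ y₀ ρ θ h1) h2) (circ_ne x₀ y₀ ρ θ h1)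
  have hder : ∀ ρ, 0 < ρ → ρ < η → ∀ θ,
      HasDerivAt (fun θ => pev F (circ x₀ y₀ ρ θ) / pev q (circ x₀ y₀ ρ θ))
        (pev J (circ x₀ y₀ ρ θ) / pev q (circ x₀ y₀ ρ θ) ^ 2) θ := by
    intro ρ h1 h2 θ
    have := (circ_deriv x₀ y₀ ρ θ F).fun_div (circ_deriv x₀ y₀ ρ θ q) (hqc ρ θ h1 h2)
    rwa [hJ, pev_sub, pev_mul, pev_mul]
  have hnear : ∀ᶠ v in 𝓝 (x₀, y₀), 2 * dist v (x₀, y₀) < η := by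
    filter_upwards [Metric.ball_mem_nhds (x₀, y₀) (half_pos hη)] with v hv
    rw [Metric.mem_ball] at hv
    linarith
  by_cases hJ0 : J = 0
  · refine ⟨X 1 - C y₀, ?_, ?_⟩
    · intro h
      have := congrArg (fun P => pev P (0, y₀ + 1)) h
      simp [pev] at this
    · filter_upwards [hnear] with v hv hne
      obtain ⟨ρ, θ, hρ, rfl⟩ := circ_polar x₀ y₀ v hne
      have hd' := circ_dist' x₀ y₀ ρ θ hρ
      have hρη : ρ < η := by linarith
      refine ⟨circ x₀ y₀ ρ 0, circ_ne _ _ _ _ hρ, (circ_dist _ _ _ _ hρ).trans hd', ?_, ?_⟩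
      · simp [pev, circ]
      · rw [hfd _ (hqc ρ _ hρ hρη), hfd _ (hqc ρ _ hρ hρη)]
        have hc := is_const_of_deriv_eq_zero
          (fun t => (hder ρ hρ hρη t).differentiableAt) (fun t => by
            rw [(hder ρ hρ hρη t).deriv, hJ0, pev_zero, zero_div]) 0 θ
        rw [hc]
  · have hF0 : F ≠ 0 := by
      intro h
      apply hJ0
      rw [hJ, h]; simp
    refine ⟨F * J, mul_ne_zero hF0 hJ0, ?_⟩
    filter_upwards [hnear] with v hv hne
    obtain ⟨ρ, θ, hρ, rfl⟩ := circ_polar x₀ y₀ v hne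
    have hd' := circ_dist' x₀ y₀ ρ θ hρ
    have hρη : ρ < η := by linarith
    let g : ℝ → ℝ := fun θ => (pev F (circ x₀ y₀ ρ θ) / pev q (circ x₀ y₀ ρ θ)) ^ 2
    have hg : ∀ t, HasDerivAt g (2 * (pev F (circ x₀ y₀ ρ t) / pev q (circ x₀ y₀ ρ t)) *
        (pev J (circ x₀ y₀ ρ t) / pev q (circ x₀ y₀ ρ t) ^ 2)) t := by
      intro t
      have := (hder ρ hρ hρη t).fun_pow 2
      simpa using this
    have hgc : Continuous g := continuous_iff_continuousAt.2 fun t => (hg t).continuousAt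
    have hper : Function.Periodic g (2 * Real.pi) := by
      intro t
      simp only [g, circ, Real.cos_add_two_pi, Real.sin_add_two_pi]
    obtain ⟨t, ht, hmin⟩ := isCompact_Icc.exists_isMinOn
      (Set.nonempty_Icc.2 Real.two_pi_pos.le) hgc.continuousOn
    have hmin' : ∀ s, g t ≤ g s := by
      intro s
      obtain ⟨s', hs', e⟩ := hper.exists_mem_Ico₀ Real.two_pi_pos s
      rw [e]
      exact hmin ⟨hs'.1, hs'.2.le⟩
    have h0 := IsLocalMin.hasDerivAt_eq_zero (Eventually.of_forall hmin') (hg t)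
    have hqt := hqc ρ t hρ hρη
    refine ⟨circ x₀ y₀ ρ t, circ_ne _ _ _ _ hρ, (circ_dist _ _ _ _ hρ).trans hd', ?_, ?_⟩
    · rw [pev_mul]
      simpa [hqt] using h0
    · rw [hfd _ hqt, hfd _ (hqc ρ _ hρ hρη)]
      exact sq_le_sq.1 (hmin' θ)


/-- Every limiting value `d` of a bounded rational function at `v₀` is attained along a
sequence which simultaneously makes every rational function bounded near `v₀` eventually
defined and convergent. -/
theorem limval_attained_along_character_sequence (p q : MvPolynomial (Fin 2) ℝ)
    (hq : q ≠ 0) (hcop : ∀ d : MvPolynomial (Fin 2) ℝ, d ∣ p → d ∣ q → IsUnit d)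
    (x₀ y₀ : ℝ) (hb : BoundedNear p q (x₀, y₀)) (d : ℝ)
    (hd : d ∈ LimVals p q (x₀, y₀)) :
    ∃ v : ℕ → ℝ × ℝ, Tendsto v atTop (𝓝 ((x₀, y₀) : ℝ × ℝ)) ∧
      (∀ n, v n ≠ ((x₀ : ℝ), (y₀ : ℝ))) ∧
      Tendsto (fun n => pev p (v n) / pev q (v n)) atTop (𝓝 d) ∧
      ∀ r s : MvPolynomial (Fin 2) ℝ, s ≠ 0 →
        (∀ e : MvPolynomial (Fin 2) ℝ, e ∣ r → e ∣ s → IsUnit e) →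
        BoundedNear r s (x₀, y₀) →
        (∀ᶠ n in atTop, pev s (v n) ≠ 0) ∧
        ∃ l : ℝ, Tendsto (fun n => pev r (v n) / pev s (v n)) atTop (𝓝 l) := by
  have hqne := den_ne p q hq hcop (x₀, y₀) hb
  obtain ⟨v, hv, hvne, hvq, hvd⟩ := hd
  obtain ⟨H, hH, hcurve⟩ := exists_curve p q x₀ y₀ d hqne
  obtain ⟨N, hN⟩ := eventually_atTop.1 (hv.eventually hcurve)
  have hN' : ∀ n, ∃ u, u ≠ (x₀, y₀) ∧ dist u (x₀, y₀) ≤ 2 * dist (v (n + N)) (x₀, y₀) ∧ pev H u = 0 ∧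
        |pev p u / pev q u - d| ≤ |pev p (v (n + N)) / pev q (v (n + N)) - d| :=
    fun n => hN (n + N) (by omega) (hvne _)
  choose u hune hudist huH hud using hN'
  have hv' : Tendsto (fun n => 2 * dist (v (n + N)) (x₀, y₀)) atTop (𝓝 0) := by
    have h1 := (tendsto_iff_dist_tendsto_zero.1 hv).comp (tendsto_add_atTop_nat N)
    simpa using h1.const_mul 2
  have hu : Tendsto u atTop (𝓝 (x₀, y₀)) :=
    tendsto_iff_dist_tendsto_zero.2 (squeeze_zero (fun _ => dist_nonneg) hudist hv')
  have hfu : Tendsto (fun n => pev p (u n) / pev q (u n)) atTop (𝓝 d) := by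
    have h1 := (tendsto_iff_dist_tendsto_zero.1 hvd).comp (tendsto_add_atTop_nat N)
    refine tendsto_iff_dist_tendsto_zero.2 (squeeze_zero (fun _ => dist_nonneg) (fun n => ?_) h1)
    simpa [Real.dist_eq] using hud n
  obtain ⟨φ, hφ, hgood⟩ := key H hH x₀ y₀ u hu hune huH
  have huφ : Tendsto (u ∘ φ) atTop (𝓝 (x₀, y₀)) := hu.comp hφ.tendsto_atTop
  refine ⟨u ∘ φ, huφ, fun n => hune _, hfu.comp hφ.tendsto_atTop, fun r s hs hrs hbrs => ?_⟩
  have hsne : ∀ᶠ n in atTop, pev s ((u ∘ φ) n) ≠ 0 := by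
    filter_upwards [huφ.eventually (den_ne r s hs hrs (x₀, y₀) hbrs)] with n hn
    exact hn (hune _)
  exact ⟨hsne, good_converges _ hgood (x₀, y₀) huφ r s hsne hbrs⟩
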